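/- Let T_new and T_old be two terminating transition systems sharing an input type X, input set Θ₀, and initial-state maps ι_new, ι_old. Suppose φ_new is a potential function for T_new, χ_old is an anti-potential function for T_old, and t ∈ ℝ satisfies φ_new(ι_new x) − χ_old(ι_old x) ≤ t for every x ∈ Θ₀. Then t is a threshold for the differential cost analysis (DiffCost) problem: for every x ∈ Θ₀, every run ρ_new from ι_new x in T_new and every run ρ_old from ι_old x in T_old satisfy Cost(ρ_new) − Cost(ρ_old) ≤ t. -/

import Mathlib

/-- A run of the transition system from state `s`. -/
def IsRun {S : Type*} (step : S → S → Prop) (s : S) (ρ : ℕ → S) : Prop :=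
  ρ 0 = s ∧ ∀ n, step (ρ n) (ρ (n + 1))

/-- `s'` is reachable from `s`. -/
def ReachableFrom {S : Type*} (step : S → S → Prop) (s s' : S) : Prop :=
  ∃ ρ n, IsRun step s ρ ∧ ρ n = s'

/-- `s'` is reachable from some initial state in `Init`. -/
def Reachable {S : Type*} (step : S → S → Prop) (Init : Set S) (s' : S) : Prop :=
  ∃ s ∈ Init, ReachableFrom step s s'

/-- The system is terminating: every run from a reachable state visits a terminal state. -/
def Terminating {S : Type*} (step : S → S → Prop) (Term Init : Set S) : Prop :=
  ∀ s, Reachable step Init s → ∀ ρ, IsRun step s ρ → ∃ n, ρ n ∈ Term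

/-- The cost of a run: `c (ρ N) - c (ρ 0)` where `N` is the least index with `ρ N ∈ Term`. -/
noncomputable def RunCost {S : Type*} (Term : Set S) (c : S → ℤ) (ρ : ℕ → S) : ℤ :=
  c (ρ (sInf {n | ρ n ∈ Term})) - c (ρ 0)

/-- Potential function: sufficiency preservation and sufficiency on termination. -/
def IsPF {S : Type*} (step : S → S → Prop) (Term Init : Set S) (c : S → ℤ)
    (φ : S → ℝ) : Prop :=
  (∀ s s', Reachable step Init s → step s s' →
    φ s ≥ φ s' + ((c s' : ℝ) - (c s : ℝ))) ∧
  (∀ s, Reachable step Init s → s ∈ Term → φ s ≥ 0)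

/-- Anti-potential function: insufficiency preservation and insufficiency on termination. -/
def IsAntiPF {S : Type*} (step : S → S → Prop) (Term Init : Set S) (c : S → ℤ)
    (χ : S → ℝ) : Prop :=
  (∀ s s', Reachable step Init s → step s s' →
    χ s ≤ χ s' + ((c s' : ℝ) - (c s : ℝ))) ∧
  (∀ s, Reachable step Init s → s ∈ Term → χ s ≤ 0)

/-- `t` is a threshold for the DiffCost problem. -/
noncomputable def IsThreshold {Sn So X : Type*}
    (stepN : Sn → Sn → Prop) (TermN : Set Sn) (cN : Sn → ℤ)
    (stepO : So → So → Prop) (TermO : Set So) (cO : So → ℤ)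
    (Θ₀ : Set X) (ιN : X → Sn) (ιO : X → So) (t : ℝ) : Prop :=
  ∀ x ∈ Θ₀, ∀ ρN : ℕ → Sn, IsRun stepN (ιN x) ρN →
    ∀ ρO : ℕ → So, IsRun stepO (ιO x) ρO →
      ((RunCost TermN cN ρN : ℝ) - (RunCost TermO cO ρO : ℝ)) ≤ t

/-!
Along a run the quantity `φ + c` never increases, and `φ` is nonnegative at the first terminal
state, so the cost of the run is at most the initial value of `φ`. An anti-potential function for
`c` is the negative of a potential function for `-c`, which gives the matching lower bound.
-/

section TransitionSystem

variable {S : Type*} {step : S → S → Prop} {Term Init : Set S} {c : S → ℤ} {φ χ : S → ℝ}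
  {s : S} {ρ : ℕ → S}

theorem IsRun.reachable (hρ : IsRun step s ρ) (hs : s ∈ Init) (n : ℕ) :
    Reachable step Init (ρ n) :=
  ⟨s, hs, ρ, n, hρ, rfl⟩

theorem Terminating.exists_mem_of_isRun (hterm : Terminating step Term Init) (hs : s ∈ Init)
    (hρ : IsRun step s ρ) : ∃ n, ρ n ∈ Term :=
  hterm s ⟨s, hs, ρ, 0, hρ, hρ.1⟩ ρ hρ

theorem runCost_neg (Term : Set S) (c : S → ℤ) (ρ : ℕ → S) :
    RunCost Term (-c) ρ = -RunCost Term c ρ := by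
  simp only [RunCost, Pi.neg_apply, neg_sub_neg, neg_sub]

theorem IsPF.antitone_add_cost (hφ : IsPF step Term Init c φ) (hs : s ∈ Init)
    (hρ : IsRun step s ρ) : Antitone fun n => φ (ρ n) + c (ρ n) := by
  refine antitone_nat_of_succ_le fun n => ?_
  have hstep := hφ.1 (ρ n) (ρ (n + 1)) (hρ.reachable hs n) (hρ.2 n)
  linarith

theorem IsPF.runCost_le (hφ : IsPF step Term Init c φ) (hs : s ∈ Init)
    (hρ : IsRun step s ρ) (hvisit : ∃ n, ρ n ∈ Term) : RunCost Term c ρ ≤ φ s := by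
  set N := sInf {n | ρ n ∈ Term} with hN
  have hnonneg : 0 ≤ φ (ρ N) := hφ.2 (ρ N) (hρ.reachable hs N) (Nat.sInf_mem hvisit)
  have hdecrease : φ (ρ N) + c (ρ N) ≤ φ (ρ 0) + c (ρ 0) :=
    hφ.antitone_add_cost hs hρ (Nat.zero_le N)
  calc (RunCost Term c ρ : ℝ) = c (ρ N) - c (ρ 0) := by rw [RunCost, ← hN, Int.cast_sub]
    _ ≤ φ (ρ 0) := by linarith
    _ = φ s := by rw [hρ.1]

theorem IsAntiPF.neg (hχ : IsAntiPF step Term Init c χ) : IsPF step Term Init (-c) (-χ) := by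
  refine ⟨fun s s' hs hstep => ?_, fun s hs hTerm => neg_nonneg.mpr (hχ.2 s hs hTerm)⟩
  have hle := hχ.1 s s' hs hstep
  simp only [Pi.neg_apply, Int.cast_neg]
  linarith

theorem IsAntiPF.le_runCost (hχ : IsAntiPF step Term Init c χ) (hs : s ∈ Init)
    (hρ : IsRun step s ρ) (hvisit : ∃ n, ρ n ∈ Term) : χ s ≤ RunCost Term c ρ := by
  have hneg := hχ.neg.runCost_le hs hρ hvisit
  rwa [runCost_neg, Int.cast_neg, Pi.neg_apply, neg_le_neg_iff] at hneg

end TransitionSystem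

theorem pf_antipf_threshold_general {Sn So X : Type*}
    {stepN : Sn → Sn → Prop} {TermN : Set Sn} {cN : Sn → ℤ}
    {stepO : So → So → Prop} {TermO : Set So} {cO : So → ℤ}
    {Θ₀ : Set X} {ιN : X → Sn} {ιO : X → So}
    {φN : Sn → ℝ} (hφN : IsPF stepN TermN (ιN '' Θ₀) cN φN)
    {χO : So → ℝ} (hχO : IsAntiPF stepO TermO (ιO '' Θ₀) cO χO)
    {t : ℝ} (ht : ∀ x ∈ Θ₀, φN (ιN x) - χO (ιO x) ≤ t) {x : X} (hx : x ∈ Θ₀)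
    {ρN : ℕ → Sn} (hρN : IsRun stepN (ιN x) ρN) (hvisitN : ∃ n, ρN n ∈ TermN)
    {ρO : ℕ → So} (hρO : IsRun stepO (ιO x) ρO) (hvisitO : ∃ n, ρO n ∈ TermO) :
    (RunCost TermN cN ρN : ℝ) - RunCost TermO cO ρO ≤ t :=
  calc (RunCost TermN cN ρN : ℝ) - RunCost TermO cO ρO
      ≤ φN (ιN x) - χO (ιO x) :=
        sub_le_sub (hφN.runCost_le (Set.mem_image_of_mem ιN hx) hρN hvisitN)
          (hχO.le_runCost (Set.mem_image_of_mem ιO hx) hρO hvisitO)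
    _ ≤ t := ht x hx

/-- if a PF for the new system and an anti-PF for the old system witness
the value `t` on all inputs, then `t` is a threshold for the DiffCost problem. -/
theorem pf_antipf_threshold {Sn So X : Type*}
    (stepN : Sn → Sn → Prop) (TermN : Set Sn) (cN : Sn → ℤ)
    (stepO : So → So → Prop) (TermO : Set So) (cO : So → ℤ)
    (Θ₀ : Set X) (ιN : X → Sn) (ιO : X → So)
    (htotalN : ∀ s : Sn, ∃ s', stepN s s')
    (htotalO : ∀ s : So, ∃ s', stepO s s')
    (hTermN : ∀ s ∈ TermN, ∀ s', stepN s s' → s' = s)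
    (hTermO : ∀ s ∈ TermO, ∀ s', stepO s s' → s' = s)
    (hterminatingN : Terminating stepN TermN (ιN '' Θ₀))
    (hterminatingO : Terminating stepO TermO (ιO '' Θ₀))
    (φN : Sn → ℝ) (hφN : IsPF stepN TermN (ιN '' Θ₀) cN φN)
    (χO : So → ℝ) (hχO : IsAntiPF stepO TermO (ιO '' Θ₀) cO χO)
    (t : ℝ) (ht : ∀ x ∈ Θ₀, φN (ιN x) - χO (ιO x) ≤ t) :
    IsThreshold stepN TermN cN stepO TermO cO Θ₀ ιN ιO t :=
  fun _ hx _ hρN _ hρO => pf_antipf_threshold_general hφN hχO ht hx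
    hρN (hterminatingN.exists_mem_of_isRun (Set.mem_image_of_mem ιN hx) hρN)
    hρO (hterminatingO.exists_mem_of_isRun (Set.mem_image_of_mem ιO hx) hρO)
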